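/- arXiv:2102.00135 — 2 statements merged into one kernel-verified Lean document; each statement's English description precedes it below -/
import Mathlib

section
/- For any policy π, any state s, and any τ, τ' ≥ 0: V_τ^π(s) − V_{τ'}^π(s) = ((τ − τ')/(1−γ)) Σ_{s'} d_s^π(s') D_{π_0}^π(s'). Consequently, if π_0 is the uniform policy and τ ≥ τ' ≥ 0, then V_{τ'}^π(s) ≤ V_τ^π(s) ≤ V_{τ'}^π(s) + ((τ − τ')/(1−γ)) log|A|. -/
open Finset

noncomputable section

namespace RL

/-- The probability simplex on a finite set `A`. -/
def simplex (A : Type*) [Fintype A] : Set (A → ℝ) :=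
  {p | (∀ a, 0 ≤ p a) ∧ ∑ a, p a = 1}

/-- A policy assigns to each state a distribution over actions. -/
def IsPolicy {S A : Type*} [Fintype A] (π : S → A → ℝ) : Prop :=
  ∀ s, π s ∈ simplex A

/-- `KL q p` is the Bregman (KL) divergence `D_q^p = ∑_a p a * log (p a / q a)`. -/
def KL {A : Type*} [Fintype A] (q p : A → ℝ) : ℝ :=
  ∑ a, p a * Real.log (p a / q a)

/-- The state transition matrix `P^π` induced by policy `π`. -/
def Pmat {S A : Type*} [Fintype A] (P : S → A → S → ℝ) (π : S → A → ℝ) :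
    Matrix S S ℝ :=
  Matrix.of fun s s' => ∑ a, π s a * P s a s'

/-- `V` satisfies the Bellman equation for policy `π`, cost `c`, regularizer `h`,
and discount factor `γ`. -/
def IsValue {S A : Type*} [Fintype S] [Fintype A] (P : S → A → S → ℝ)
    (c : S → A → ℝ) (h : S → (A → ℝ) → ℝ) (γ : ℝ) (π : S → A → ℝ)
    (V : S → ℝ) : Prop :=
  ∀ s, V s = (∑ a, π s a * c s a) + h s (π s)
    + γ * ∑ s', (∑ a, π s a * P s a s') * V s'

/-- The action-value function `Q^π` determined by a state-value function `V`. -/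
def Qfun {S A : Type*} [Fintype S] (P : S → A → S → ℝ) (c : S → A → ℝ)
    (h : S → (A → ℝ) → ℝ) (γ : ℝ) (π : S → A → ℝ) (V : S → ℝ) :
    S → A → ℝ :=
  fun s a => c s a + h s (π s) + γ * ∑ s', P s a s' * V s'

/-- The discounted state-visitation distribution `d_s^π(s')`. -/
def dvisit {S A : Type*} [Fintype S] [Fintype A] [DecidableEq S]
    (P : S → A → S → ℝ) (γ : ℝ) (π : S → A → ℝ) (s s' : S) : ℝ :=
  (1 - γ) * ∑' t : ℕ, γ ^ t * ((Pmat P π) ^ t) s s'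

/-- `next` minimizes `p ↦ η * (⟨G, p⟩ + hreg p) + KL base p` over the simplex. -/
def IsProxStep {A : Type*} [Fintype A] (G : A → ℝ) (hreg : (A → ℝ) → ℝ)
    (η : ℝ) (base next : A → ℝ) : Prop :=
  next ∈ simplex A ∧ ∀ p ∈ simplex A,
    η * ((∑ a, G a * next a) + hreg next) + KL base next ≤
      η * ((∑ a, G a * p a) + hreg p) + KL base p

/-- `h` is convex with modulus `μ` relative to KL, with subgradients `h'`. -/
def ConvexReg {S A : Type*} [Fintype A] (h : S → (A → ℝ) → ℝ)
    (h' : S → (A → ℝ) → A → ℝ) (μ : ℝ) : Prop :=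
  ∀ s : S, ∀ p ∈ simplex A, ∀ q ∈ simplex A,
    μ * KL q p ≤ h s p - (h s q + ∑ a, h' s q a * (p a - q a))

/-!
The difference `u = V_τ - V_{τ'}` of two value functions of the same policy solves
`u = (τ - τ') D + γ P^π u` with `D s = KL (π0 s) (π s)`. Powers of the row-stochastic matrix `P^π`
have entries in `[0, 1]`, so the Neumann series `∑ₜ (γ P^π)ᵗ` converges and inverts `1 - γ P^π`;
hence `u = (τ - τ') ∑ₜ (γ P^π)ᵗ D`. Up to the factor `1 - γ` the entries of that series are the
visitation probabilities. They form a row-stochastic matrix again, so bounds on `D` pass to its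
average against them.
-/

section StochasticMatrix

open Matrix

variable {n : Type*} [Fintype n] [DecidableEq n]

lemma mulVec_apply_le_of_mem_rowStochastic {R : Type*} [Semiring R] [PartialOrder R]
    [IsOrderedRing R] {M : Matrix n n R} (hM : M ∈ rowStochastic R n) {x : n → R} {b : R}
    (hx : ∀ j, x j ≤ b) (i : n) : (M *ᵥ x) i ≤ b :=
  calc (M *ᵥ x) i ≤ ∑ j, M i j * b :=
        sum_le_sum fun j _ => mul_le_mul_of_nonneg_left (hx j) (nonneg_of_mem_rowStochastic hM)
    _ = b := by rw [← sum_mul, sum_row_of_mem_rowStochastic hM, one_mul]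

lemma tsum_pow_mulVec_eq_of_eq_add_mulVec {R : Type*} [Ring R] [TopologicalSpace R]
    [IsTopologicalRing R] [T2Space R] {M : Matrix n n R} (hM : Summable fun t : ℕ => M ^ t)
    {u b : n → R} (hu : u = b + M *ᵥ u) : (∑' t : ℕ, M ^ t) *ᵥ b = u := by
  have hb : b = (1 - M) *ᵥ u := by rw [sub_mulVec, one_mulVec, eq_sub_iff_add_eq, ← hu]
  rw [hb, mulVec_mulVec, hM.tsum_pow_mul_one_sub, one_mulVec]

variable {M : Matrix n n ℝ} {γ : ℝ}

lemma summable_smul_pow_of_mem_rowStochastic (hM : M ∈ rowStochastic ℝ n) (hγ : |γ| < 1) :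
    Summable fun t : ℕ => (γ • M) ^ t := by
  have hentry (i j : n) (t : ℕ) : ‖((γ • M) ^ t) i j‖ ≤ |γ| ^ t := by
    have hMt : M ^ t ∈ rowStochastic ℝ n := pow_mem hM t
    rw [smul_pow, Matrix.smul_apply, norm_smul, norm_pow, Real.norm_eq_abs,
      Real.norm_of_nonneg (nonneg_of_mem_rowStochastic hMt)]
    exact mul_le_of_le_one_right (by positivity) (le_one_of_mem_rowStochastic hMt)
  exact Pi.summable.2 fun i => Pi.summable.2 fun j =>
    .of_norm_bounded (summable_geometric_of_lt_one (abs_nonneg γ) hγ) (hentry i j)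

/-- The normalized resolvent `(1 - γ) ∑ₜ γᵗ Mᵗ` of a Markov chain with transition matrix `M`: its
rows are the `γ`-discounted visitation distributions of the chain. -/
def discountedVisitation (γ : ℝ) (M : Matrix n n ℝ) : Matrix n n ℝ :=
  (1 - γ) • ∑' t : ℕ, (γ • M) ^ t

lemma discountedVisitation_apply (hM : M ∈ rowStochastic ℝ n) (hγ : |γ| < 1) (i j : n) :
    discountedVisitation γ M i j = (1 - γ) * ∑' t : ℕ, γ ^ t * (M ^ t) i j := by
  have hsum := summable_smul_pow_of_mem_rowStochastic hM hγ
  have hentry : (∑' t : ℕ, (γ • M) ^ t) i j = ∑' t : ℕ, ((γ • M) ^ t) i j :=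
    (congrFun (tsum_apply hsum) j).trans (tsum_apply (Pi.summable.1 hsum i))
  rw [discountedVisitation, Matrix.smul_apply, hentry, smul_eq_mul]
  simp only [smul_pow, Matrix.smul_apply, smul_eq_mul]

lemma discountedVisitation_mulVec_eq_of_eq_add_mulVec (hM : M ∈ rowStochastic ℝ n) (hγ : |γ| < 1)
    {u b : n → ℝ} (hu : u = b + (γ • M) *ᵥ u) :
    discountedVisitation γ M *ᵥ b = (1 - γ) • u := by
  rw [discountedVisitation, smul_mulVec, tsum_pow_mulVec_eq_of_eq_add_mulVec
    (summable_smul_pow_of_mem_rowStochastic hM hγ) hu]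

lemma discountedVisitation_mem_rowStochastic (hM : M ∈ rowStochastic ℝ n) (hγ0 : 0 ≤ γ)
    (hγ1 : γ < 1) : discountedVisitation γ M ∈ rowStochastic ℝ n := by
  have hγ : |γ| < 1 := by rwa [abs_of_nonneg hγ0]
  have hγ' : 0 < 1 - γ := sub_pos.2 hγ1
  refine mem_rowStochastic.2 ⟨fun i j => ?_, ?_⟩
  · rw [discountedVisitation_apply hM hγ]
    exact mul_nonneg hγ'.le (tsum_nonneg fun t =>
      mul_nonneg (pow_nonneg hγ0 t) (nonneg_of_mem_rowStochastic (pow_mem hM t)))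
  · -- The constant vector `(1 - γ)⁻¹` is the value function of the unit reward.
    have hone : (1 - γ)⁻¹ • (1 : n → ℝ) = 1 + (γ • M) *ᵥ ((1 - γ)⁻¹ • (1 : n → ℝ)) := by
      rw [mulVec_smul, smul_mulVec, one_vecMul_of_mem_rowStochastic hM]
      ext
      simp only [Pi.smul_apply, Pi.add_apply, Pi.one_apply, smul_eq_mul, mul_one]
      field_simp
      ring
    rw [discountedVisitation_mulVec_eq_of_eq_add_mulVec hM hγ hone, smul_inv_smul₀ hγ'.ne']

end StochasticMatrix

section KL

variable {A : Type*} [Fintype A] {p q : A → ℝ}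

lemma KL_eq_sum_mul_klFun_add (hq : ∀ a, q a ≠ 0) :
    KL q p = ∑ a, q a * InformationTheory.klFun (p a / q a) + (∑ a, p a - ∑ a, q a) := by
  rw [KL, ← sum_sub_distrib, ← sum_add_distrib]
  refine sum_congr rfl fun a _ => ?_
  have hqa := hq a
  rw [InformationTheory.klFun_apply]
  field_simp
  ring

lemma KL_nonneg (hp : ∀ a, 0 ≤ p a) (hq : ∀ a, 0 < q a) (hqp : ∑ a, q a ≤ ∑ a, p a) :
    0 ≤ KL q p := by
  rw [KL_eq_sum_mul_klFun_add fun a => (hq a).ne']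
  refine add_nonneg (sum_nonneg fun a _ => ?_) (sub_nonneg.2 hqp)
  exact mul_nonneg (hq a).le (InformationTheory.klFun_nonneg (div_nonneg (hp a) (hq a).le))

lemma KL_le_log_inv {δ : ℝ} (hp : p ∈ simplex A) (hδ : 0 < δ) (hq : ∀ a, δ ≤ q a) :
    KL q p ≤ Real.log δ⁻¹ := by
  have hterm (a : A) : p a * Real.log (p a / q a) ≤ p a * Real.log δ⁻¹ := by
    rcases (hp.1 a).eq_or_lt with hpa | hpa
    · simp only [← hpa, zero_mul, le_refl]
    · have hqa : 0 < q a := hδ.trans_le (hq a)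
      have hratio : p a / q a ≤ δ⁻¹ := by
        rw [← one_div]
        exact div_le_div₀ zero_le_one (mem_Icc_of_mem_stdSimplex hp a).2 hδ (hq a)
      exact mul_le_mul_of_nonneg_left (Real.log_le_log (div_pos hpa hqa) hratio) hpa.le
  calc KL q p ≤ ∑ a, p a * Real.log δ⁻¹ := sum_le_sum fun a _ => hterm a
    _ = Real.log δ⁻¹ := by rw [← sum_mul, hp.2, one_mul]

end KL

section Value

open Matrix

variable {S A : Type*} [Fintype S] [Fintype A] {P : S → A → S → ℝ} {π : S → A → ℝ} {γ : ℝ}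

lemma Pmat_mem_rowStochastic [DecidableEq S] (hP0 : ∀ s a s', 0 ≤ P s a s')
    (hP1 : ∀ s a, ∑ s', P s a s' = 1) (hπ : IsPolicy π) : Pmat P π ∈ rowStochastic ℝ S := by
  refine mem_rowStochastic_iff_sum.2 ⟨fun s s' => ?_, fun s => ?_⟩
  · exact sum_nonneg fun a _ => mul_nonneg ((hπ s).1 a) (hP0 s a s')
  · simp only [Pmat, of_apply]
    rw [sum_comm]
    simp only [← mul_sum, hP1, mul_one, (hπ s).2]

lemma discountedVisitation_Pmat_mulVec_apply [DecidableEq S] (hM : Pmat P π ∈ rowStochastic ℝ S)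
    (hγ : |γ| < 1) (b : S → ℝ) (s : S) :
    (discountedVisitation γ (Pmat P π) *ᵥ b) s = ∑ s', dvisit P γ π s s' * b s' := by
  simp only [mulVec_apply_eq_sum, discountedVisitation_apply hM hγ, dvisit]

variable {c : S → A → ℝ} {h h' : S → (A → ℝ) → ℝ} {V V' : S → ℝ}

lemma IsValue.sub_eq_add_mulVec (hV : IsValue P c h γ π V) (hV' : IsValue P c h' γ π V') :
    V - V' = (fun s => h s (π s) - h' s (π s)) + (γ • Pmat P π) *ᵥ (V - V') := by
  ext s
  have hPV (W : S → ℝ) :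
      ((γ • Pmat P π) *ᵥ W) s = γ * ∑ s', (∑ a, π s a * P s a s') * W s' := by
    rw [smul_mulVec]
    rfl
  rw [mulVec_sub, Pi.add_apply, Pi.sub_apply, Pi.sub_apply, hPV, hPV]
  linarith only [hV s, hV' s]

lemma IsValue.sub_eq_sum_dvisit [DecidableEq S] (hV : IsValue P c h γ π V)
    (hV' : IsValue P c h' γ π V') (hM : Pmat P π ∈ rowStochastic ℝ S) (hγ : |γ| < 1) (s : S) :
    V s - V' s = (1 - γ)⁻¹ * ∑ s', dvisit P γ π s s' * (h s' (π s') - h' s' (π s')) := by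
  have hγ' : 1 - γ ≠ 0 := (sub_pos.2 (abs_lt.1 hγ).2).ne'
  rw [← discountedVisitation_Pmat_mulVec_apply hM hγ,
    discountedVisitation_mulVec_eq_of_eq_add_mulVec hM hγ (hV.sub_eq_add_mulVec hV'),
    Pi.smul_apply, smul_eq_mul, inv_mul_cancel_left₀ hγ', Pi.sub_apply]

lemma IsValue.sub_eq_sum_dvisit_mul_KL [DecidableEq S] {π0 : S → A → ℝ} {τ τ' : ℝ}
    (hV : IsValue P c (fun s p => h s p + τ * KL (π0 s) p) γ π V)
    (hV' : IsValue P c (fun s p => h s p + τ' * KL (π0 s) p) γ π V')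
    (hM : Pmat P π ∈ rowStochastic ℝ S) (hγ : |γ| < 1) (s : S) :
    V s - V' s = (τ - τ') / (1 - γ) * ∑ s', dvisit P γ π s s' * KL (π0 s') (π s') := by
  rw [hV.sub_eq_sum_dvisit hV' hM hγ s, div_eq_inv_mul, mul_assoc, mul_sum _ _ (τ - τ')]
  congr! 2 with s'
  ring

end Value

theorem perturbed_value_difference_general {S A : Type*} [Fintype S] [Fintype A] [DecidableEq S]
    (P : S → A → S → ℝ) (hP0 : ∀ s a s', 0 ≤ P s a s')
    (hP1 : ∀ s a, ∑ s', P s a s' = 1)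
    (c : S → A → ℝ) (γ : ℝ) (hγ0 : 0 ≤ γ) (hγ1 : γ < 1)
    (h : S → (A → ℝ) → ℝ)
    (π0 : S → A → ℝ) (hπ0 : IsPolicy π0) (hπ0pos : ∀ s a, 0 < π0 s a)
    (π : S → A → ℝ) (hπ : IsPolicy π) (τ τ' : ℝ) (V V' : S → ℝ)
    (hV : IsValue P c (fun s p => h s p + τ * KL (π0 s) p) γ π V)
    (hV' : IsValue P c (fun s p => h s p + τ' * KL (π0 s) p) γ π V') :
    (∀ s, V s - V' s =
        ((τ - τ') / (1 - γ)) * ∑ s', dvisit P γ π s s' * KL (π0 s') (π s'))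
    ∧ (τ' ≤ τ → ∀ s, V' s ≤ V s)
    ∧ ∀ δ > 0, (∀ s a, δ ≤ π0 s a) → τ' ≤ τ →
        ∀ s, V s ≤ V' s + ((τ - τ') / (1 - γ)) * Real.log δ⁻¹ := by
  have hγ : |γ| < 1 := by rwa [abs_of_nonneg hγ0]
  have hM := Pmat_mem_rowStochastic hP0 hP1 hπ
  have hD := discountedVisitation_mem_rowStochastic hM hγ0 hγ1
  have hdiff := hV.sub_eq_sum_dvisit_mul_KL hV' hM hγ
  have hcoef (hτ : τ' ≤ τ) : 0 ≤ (τ - τ') / (1 - γ) :=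
    div_nonneg (sub_nonneg.2 hτ) (sub_pos.2 hγ1).le
  refine ⟨hdiff, fun hτ s => ?_, fun δ hδ hδπ0 hτ s => ?_⟩
  · rw [← sub_nonneg, hdiff, ← discountedVisitation_Pmat_mulVec_apply hM hγ]
    exact mul_nonneg (hcoef hτ) (Matrix.nonneg_mulVec_of_mem_rowStochastic hD
      (fun s' => KL_nonneg (hπ s').1 (hπ0pos s') ((hπ0 s').2.trans (hπ s').2.symm).le) s)
  · rw [← sub_le_iff_le_add', hdiff, ← discountedVisitation_Pmat_mulVec_apply hM hγ]
    exact mul_le_mul_of_nonneg_left (mulVec_apply_le_of_mem_rowStochastic hD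
      (fun s' => KL_le_log_inv (hπ s') hδ (hδπ0 s')) s) (hcoef hτ)

/-- for any policy `π`, state `s` and `τ, τ' ≥ 0`:
`V_τ^π(s) - V_{τ'}^π(s) = ((τ - τ')/(1-γ)) ∑_{s'} d_s^π(s') D_{π_0}^π(s')`;
consequently, if `π_0` is the uniform policy and `τ ≥ τ' ≥ 0`, then
`V_{τ'}^π(s) ≤ V_τ^π(s) ≤ V_{τ'}^π(s) + ((τ - τ')/(1-γ)) log|A|`. -/
theorem perturbed_value_difference {S A : Type*} [Fintype S] [Fintype A]
    [Nonempty S] [Nonempty A] [DecidableEq S]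
    (P : S → A → S → ℝ) (hP0 : ∀ s a s', 0 ≤ P s a s')
    (hP1 : ∀ s a, ∑ s', P s a s' = 1)
    (c : S → A → ℝ) (γ : ℝ) (hγ0 : 0 < γ) (hγ1 : γ < 1)
    (h : S → (A → ℝ) → ℝ)
    (π0 : S → A → ℝ) (hπ0 : IsPolicy π0) (hπ0pos : ∀ s a, 0 < π0 s a)
    (π : S → A → ℝ) (hπ : IsPolicy π)
    (τ τ' : ℝ) (hτ : 0 ≤ τ) (hτ' : 0 ≤ τ')
    (Vτ Vτ' : S → ℝ)
    (hVτ : IsValue P c (fun s p => h s p + τ * KL (π0 s) p) γ π Vτ)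
    (hVτ' : IsValue P c (fun s p => h s p + τ' * KL (π0 s) p) γ π Vτ') :
    (∀ s, Vτ s - Vτ' s =
        ((τ - τ') / (1 - γ)) * ∑ s', dvisit P γ π s s' * KL (π0 s') (π s'))
    ∧ ((∀ s a, π0 s a = 1 / (Fintype.card A : ℝ)) → τ' ≤ τ →
        ∀ s, Vτ' s ≤ Vτ s ∧
          Vτ s ≤ Vτ' s + ((τ - τ') / (1 - γ)) * Real.log (Fintype.card A)) := by
  obtain ⟨hdiff, hmono, hupper⟩ := perturbed_value_difference_general P hP0 hP1 c γ hγ0.le hγ1 h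
    π0 hπ0 hπ0pos π hπ τ τ' Vτ Vτ' hVτ hVτ'
  refine ⟨hdiff, fun hunif hle s => ⟨hmono hle s, ?_⟩⟩
  simpa only [one_div, inv_inv] using
    hupper (1 / Fintype.card A) (by positivity) (fun s a => (hunif s a).ge) hle s

end RL
end
end

section
/- (Generalized monotonicity for perturbed value functions.) Let π* be an optimal policy and ν* a stationary distribution of P^{π*}. Then for every policy π and every τ ≥ 0: Σ_s ν*(s) [ ⟨Q_τ^π(s,·), π(·|s) − π*(·|s)⟩ + h^π(s) − h^{π*}(s) + τ(D_{π_0}^π(s) − D_{π_0}^{π*}(s)) ] = (1−γ) Σ_s ν*(s) ( V_τ^π(s) − V_τ^{π*}(s) ). -/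
open Finset

noncomputable section

namespace RL

/-!
Comparing the Bellman equations of `π` and `π'` pointwise, the advantage of `π` over `π'` at a
state `s` equals `((1 - γ P^{π'}) (V^π - V^{π'}))(s)`. Averaging against a stationary distribution
of `P^{π'}` turns the operator `1 - γ P^{π'}` into the scalar `1 - γ`. The perturbed problem is the
instance with regularizer `h + τ D_{π₀}`.
-/

section PerformanceDifference

open Matrix

theorem dotProduct_sub_smul_mulVec_of_vecMul_eq {R n : Type*} [CommRing R] [Fintype n]
    {M : Matrix n n R} {ν : n → R} (hν : ν ᵥ* M = ν) (γ : R) (U : n → R) :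
    ν ⬝ᵥ (U - γ • (M *ᵥ U)) = (1 - γ) * (ν ⬝ᵥ U) := by
  rw [dotProduct_sub, dotProduct_smul, dotProduct_mulVec, hν, smul_eq_mul, sub_mul, one_mul]

variable {S A : Type*} [Fintype S] [Fintype A] {P : S → A → S → ℝ} {c : S → A → ℝ}
  {h : S → (A → ℝ) → ℝ} {γ : ℝ} {π π' : S → A → ℝ} {V V' : S → ℝ}

theorem Pmat_mulVec_apply (P : S → A → S → ℝ) (π : S → A → ℝ) (U : S → ℝ) (s : S) :
    (Pmat P π *ᵥ U) s = ∑ a, π s a * ∑ s', P s a s' * U s' :=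
  (dotProduct_mulVec (π s) (of (P s)) U).symm

theorem sum_Qfun_mul (P : S → A → S → ℝ) (c : S → A → ℝ) (h : S → (A → ℝ) → ℝ) (γ : ℝ)
    (π w : S → A → ℝ) (V : S → ℝ) (s : S) :
    ∑ a, Qfun P c h γ π V s a * w s a =
      ∑ a, w s a * c s a + (∑ a, w s a) * h s (π s) + γ * (Pmat P w *ᵥ V) s := by
  rw [Pmat_mulVec_apply, sum_mul, mul_sum, ← sum_add_distrib, ← sum_add_distrib]
  refine sum_congr rfl fun a _ => ?_
  rw [Qfun]
  ring

theorem IsValue.sum_Qfun_mul_sub_add_sub (hV : IsValue P c h γ π V) (hV' : IsValue P c h γ π' V')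
    {s : S} (hmass : ∑ a, π s a = ∑ a, π' s a) :
    ∑ a, Qfun P c h γ π V s a * (π s a - π' s a) + (h s (π s) - h s (π' s)) =
      (V - V' - γ • (Pmat P π' *ᵥ (V - V'))) s := by
  have bellman : V s = ∑ a, π s a * c s a + h s (π s) + γ * (Pmat P π *ᵥ V) s := hV s
  have bellman' : V' s = ∑ a, π' s a * c s a + h s (π' s) + γ * (Pmat P π' *ᵥ V') s := hV' s
  simp only [mul_sub, sum_sub_distrib, sum_Qfun_mul, hmass, mulVec_sub, Pi.sub_apply,
    Pi.smul_apply, smul_eq_mul]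
  linarith

theorem generalized_monotonicity_perturbed_general (hπ : IsPolicy π) (hπ' : IsPolicy π')
    (hV : IsValue P c h γ π V) (hV' : IsValue P c h γ π' V') {ν : S → ℝ}
    (hν : ν ᵥ* Pmat P π' = ν) :
    ∑ s, ν s * (∑ a, Qfun P c h γ π V s a * (π s a - π' s a) + (h s (π s) - h s (π' s))) =
      (1 - γ) * ∑ s, ν s * (V s - V' s) := by
  have hmass (s : S) : ∑ a, π s a = ∑ a, π' s a := (hπ s).2.trans (hπ' s).2.symm
  simp only [hV.sum_Qfun_mul_sub_add_sub hV' (hmass _)]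
  exact dotProduct_sub_smul_mulVec_of_vecMul_eq hν γ (V - V')

end PerformanceDifference

/-- generalized monotonicity for perturbed value functions: for
an optimal policy `π*` with stationary distribution `ν*`, every policy `π` and
every `τ ≥ 0`:
`∑_s ν*(s) [⟨Q_τ^π(s,·), π(·|s) - π*(·|s)⟩ + h^π(s) - h^{π*}(s)
  + τ(D_{π_0}^π(s) - D_{π_0}^{π*}(s))] = (1-γ) ∑_s ν*(s) (V_τ^π(s) - V_τ^{π*}(s))`. -/
theorem generalized_monotonicity_perturbed {S A : Type*} [Fintype S] [Fintype A]
    [Nonempty S] [Nonempty A]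
    (P : S → A → S → ℝ) (hP0 : ∀ s a s', 0 ≤ P s a s')
    (hP1 : ∀ s a, ∑ s', P s a s' = 1)
    (c : S → A → ℝ) (γ : ℝ) (hγ0 : 0 < γ) (hγ1 : γ < 1)
    (h : S → (A → ℝ) → ℝ)
    (π0 : S → A → ℝ) (hπ0 : IsPolicy π0) (hπ0pos : ∀ s a, 0 < π0 s a)
    (V : ℝ → (S → A → ℝ) → S → ℝ)
    (hV : ∀ τ : ℝ, 0 ≤ τ → ∀ w : S → A → ℝ, IsPolicy w →
      IsValue P c (fun s p => h s p + τ * KL (π0 s) p) γ w (V τ w))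
    (πstar : S → A → ℝ) (hπstar : IsPolicy πstar)
    (hopt : ∀ w : S → A → ℝ, IsPolicy w → ∀ s, V 0 πstar s ≤ V 0 w s)
    (ν : S → ℝ) (hν0 : ∀ s, 0 ≤ ν s) (hν1 : ∑ s, ν s = 1)
    (hstat : ∀ s', ∑ s, ν s * (∑ a, πstar s a * P s a s') = ν s')
    (π : S → A → ℝ) (hπ : IsPolicy π) (τ : ℝ) (hτ : 0 ≤ τ) :
    ∑ s, ν s *
        ((∑ a, Qfun P c (fun s' p => h s' p + τ * KL (π0 s') p) γ π (V τ π) s a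
            * (π s a - πstar s a))
          + (h s (π s) - h s (πstar s))
          + τ * (KL (π0 s) (π s) - KL (π0 s) (πstar s)))
      = (1 - γ) * ∑ s, ν s * (V τ π s - V τ πstar s) := by
  simpa only [add_sub_add_comm, ← mul_sub, ← add_assoc] using
    generalized_monotonicity_perturbed_general hπ hπstar (hV τ hτ π hπ) (hV τ hτ πstar hπstar)
      (funext hstat)

end RL
end
end
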